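/- Let F be a field, let n ≥ 2 be an integer, and let a, b ∈ SL_n(F) be diagonal matrices each of whose n diagonal entries are pairwise distinct (i.e., a and b are split regular semisimple). Then every element g of SL_n(F) that is not in the center Z(SL_n(F)) can be written as g = (x a x⁻¹)(y b y⁻¹) for some x, y ∈ SL_n(F); that is, every noncentral element lies in the product of the conjugacy classes of a and b. -/

import Mathlib

/-- Similarity of square matrices, allowing a change of index type. -/
def MSim {F : Type*} [Field F] {ι κ : Type*} [Fintype ι] [DecidableEq ι] [Fintype κ]
    [DecidableEq κ] (A : Matrix ι ι F) (B : Matrix κ κ F) : Prop :=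
  ∃ (P : Matrix ι κ F) (Q : Matrix κ ι F), P * Q = 1 ∧ Q * P = 1 ∧ A = P * B * Q

section helpers
variable {F : Type*} [Field F] {ι κ l : Type*} [Fintype ι] [DecidableEq ι] [Fintype κ]
    [DecidableEq κ] [Fintype l] [DecidableEq l]

theorem MSim.trans {A : Matrix ι ι F} {B : Matrix κ κ F} {C : Matrix l l F}
    (h : MSim A B) (h' : MSim B C) : MSim A C := by
  obtain ⟨P, Q, h1, h2, rfl⟩ := h
  obtain ⟨P', Q', h1', h2', rfl⟩ := h'
  refine ⟨P * P', Q' * Q, ?_, ?_, ?_⟩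
  · rw [Matrix.mul_assoc, ← Matrix.mul_assoc P', h1', Matrix.one_mul, h1]
  · rw [Matrix.mul_assoc, ← Matrix.mul_assoc Q, h2, Matrix.one_mul, h2']
  · simp only [Matrix.mul_assoc]

theorem MSim.symm {A : Matrix ι ι F} {B : Matrix κ κ F}
    (h : MSim A B) : MSim B A := by
  obtain ⟨P, Q, h1, h2, rfl⟩ := h
  refine ⟨Q, P, h2, h1, ?_⟩
  calc B = (Q * P) * B * (Q * P) := by simp [h2]
    _ = _ := by simp only [Matrix.mul_assoc]

theorem MSim.transpose {A : Matrix ι ι F} {B : Matrix κ κ F}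
    (h : MSim A B) : MSim A.transpose B.transpose := by
  obtain ⟨P, Q, h1, h2, rfl⟩ := h
  refine ⟨Q.transpose, P.transpose, ?_, ?_, ?_⟩
  · rw [← Matrix.transpose_mul, h1, Matrix.transpose_one]
  · rw [← Matrix.transpose_mul, h2, Matrix.transpose_one]
  · simp only [Matrix.transpose_mul, Matrix.mul_assoc]

theorem MSim.submatrix (A : Matrix κ κ F) (e : ι ≃ κ) : MSim (A.submatrix e e) A := by
  refine ⟨(1 : Matrix κ κ F).submatrix e id, (1 : Matrix κ κ F).submatrix id e, ?_, ?_, ?_⟩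
  · rw [← Matrix.submatrix_mul _ _ _ _ _ Function.bijective_id]; simp
  · rw [← Matrix.submatrix_mul _ _ _ _ _ e.bijective]; simp
  · ext i j
    simp [Matrix.mul_apply, Matrix.one_apply]

theorem MSim.det {A : Matrix ι ι F} {B : Matrix κ κ F} (h : MSim A B) : A.det = B.det := by
  obtain ⟨P, Q, h1, h2, rfl⟩ := h
  exact Matrix.det_conj_of_mul_eq_one h1 h2

/-- Splitting off the first index. -/
def sumFinEquiv (m : ℕ) : Unit ⊕ Fin m ≃ Fin (m + 1) :=
  ((finSuccEquiv m).trans ((Equiv.optionEquivSumPUnit _).trans (Equiv.sumComm _ _))).symm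

theorem sumFinEquiv_inl (m : ℕ) (u : Unit) : sumFinEquiv m (Sum.inl u) = 0 := by
  simp [sumFinEquiv]

theorem sumFinEquiv_inr (m : ℕ) (i : Fin m) : sumFinEquiv m (Sum.inr i) = i.succ := by
  simp [sumFinEquiv]

theorem MSim.lower {m : ℕ} (β : Fin (m + 1) → F) (hβ : Function.Injective β)
    (c : Matrix (Fin m) Unit F) (B : Matrix (Fin m) (Fin m) F)
    (hB : MSim B (Matrix.diagonal fun i : Fin m => β i.succ)) :
    MSim (Matrix.fromBlocks (β 0 • (1 : Matrix Unit Unit F)) 0 c B) (Matrix.diagonal β) := by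
  have key : MSim (Matrix.fromBlocks (β 0 • (1 : Matrix Unit Unit F)) 0 0
      (Matrix.diagonal fun i : Fin m => β i.succ)) (Matrix.diagonal β) := by
    convert MSim.submatrix (Matrix.diagonal β) (sumFinEquiv m)
    rw [Matrix.submatrix_diagonal_equiv]
    ext i j
    rcases i with i | i <;> rcases j with j | j <;> 
      simp [Matrix.diagonal_apply, sumFinEquiv_inl, sumFinEquiv_inr, Matrix.one_apply]
  refine MSim.trans ?_ key
  obtain ⟨P, Q, h1, h2, rfl⟩ := hB
  set Δ := Matrix.diagonal fun i : Fin m => β i.succ with hΔ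
  obtain ⟨y, hy⟩ : ∃ y : Matrix (Fin m) Unit F, β 0 • y - Δ * y = Q * c := by
    refine ⟨Matrix.of fun i j => (Q * c) i j / (β 0 - β i.succ), ?_⟩
    ext i j
    have : β 0 - β i.succ ≠ 0 := sub_ne_zero.2 fun h => (Fin.succ_ne_zero i) (hβ h).symm
    simp only [hΔ, Matrix.sub_apply, Matrix.smul_apply, Matrix.diagonal_mul, Matrix.of_apply,
      smul_eq_mul]
    field_simp
  refine ⟨Matrix.fromBlocks 1 0 (P * y) P, Matrix.fromBlocks 1 0 (-y) Q, ?_, ?_, ?_⟩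
  · simp [Matrix.fromBlocks_multiply, h1]
  · simp [Matrix.fromBlocks_multiply, ← Matrix.mul_assoc, h2]
  · simp only [Matrix.fromBlocks_multiply]
    congr 1
    · simp
    · simp
    · have : P * (Q * c) = c := by rw [← Matrix.mul_assoc, h1, Matrix.one_mul]
      rw [← this, ← hy]
      rw [Matrix.mul_sub]
      simp [Matrix.mul_assoc, sub_eq_add_neg]
    · simp

theorem MSim.upper {m : ℕ} (β : Fin (m + 1) → F) (hβ : Function.Injective β)
    (c : Matrix Unit (Fin m) F) (B : Matrix (Fin m) (Fin m) F)
    (hB : MSim B (Matrix.diagonal fun i : Fin m => β i.succ)) :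
    MSim (Matrix.fromBlocks (β 0 • (1 : Matrix Unit Unit F)) c 0 B) (Matrix.diagonal β) := by
  have := (MSim.lower β hβ c.transpose B.transpose (by simpa using hB.transpose)).transpose
  simpa [Matrix.fromBlocks_transpose] using this

/-- A nonscalar matrix is similar to one with prescribed corner. -/
theorem MSim.exists_corner {m : ℕ} (A : Matrix (Fin (m + 1)) (Fin (m + 1)) F)
    (hA : ∀ s : F, A ≠ s • 1) (α : F) :
    ∃ (r : Matrix Unit (Fin m) F) (c : Matrix (Fin m) Unit F) (D : Matrix (Fin m) (Fin m) F),
      c ≠ 0 ∧ MSim A (Matrix.fromBlocks (α • 1) r c D) := by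
  obtain ⟨v, hv⟩ : ∃ v, LinearIndependent F ![v, A.mulVecLin v] := by
    by_contra! h
    obtain ⟨s, hs⟩ := LinearMap.exists_eq_smul_id_of_forall_notLinearIndependent h
    refine hA s (Matrix.toLin'.injective ?_)
    rw [Matrix.toLin'_apply', hs]
    simp [Module.End.one_eq_id]
  obtain ⟨f, hf⟩ : ∃ f : Module.Dual F (Fin (m + 1) → F), f v = 1 ∧ f (A.mulVecLin v) = α := by
    obtain ⟨g, hg⟩ := LinearMap.exists_leftInverse_of_injective
      (Fintype.linearCombination F ![v, A.mulVecLin v])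
      (by rw [LinearMap.ker_eq_bot]; exact linearIndependent_iff_injective_fintypeLinearCombination.1 hv)
    have h0 := LinearMap.congr_fun hg (Pi.single 0 1)
    have h1 := LinearMap.congr_fun hg (Pi.single 1 1)
    simp only [LinearMap.comp_apply, Fintype.linearCombination_apply_single, one_smul,
      LinearMap.id_apply] at h0 h1
    refine ⟨LinearMap.proj 0 ∘ₗ g + α • (LinearMap.proj 1 ∘ₗ g), ?_, ?_⟩
    · have : g v = Pi.single 0 1 := h0
      simp [this]
    · have : g (A.mulVecLin v) = Pi.single 1 1 := h1
      simp only [LinearMap.add_apply, LinearMap.smul_apply, LinearMap.comp_apply, this]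
      simp
  obtain ⟨hf1, hf2⟩ := hf
  have hf0 : f ≠ 0 := by rintro rfl; simp at hf1
  have hrk : Module.finrank F (LinearMap.ker f) = m := by
    have := Module.Dual.finrank_ker_add_one_of_ne_zero hf0
    simpa using this
  let bk := Module.finBasisOfFinrankEq F (LinearMap.ker f) hrk
  let b : Module.Basis (Fin (m + 1)) F (Fin (m + 1) → F) := Module.Basis.mkFinCons v bk
    (by
      intro c x hx h
      have := congrArg f h
      rw [LinearMap.mem_ker] at hx
      simpa [hf1, hx] using this)
    (by
      intro z
      refine ⟨-f z, ?_⟩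
      simp [LinearMap.mem_ker, hf1])
  have hb : ⇑b = Fin.cons v ((↑) ∘ bk) := Module.Basis.coe_mkFinCons _ _ _ _
  have hb0 : b 0 = v := by rw [hb]; rfl
  have hbs : ∀ i : Fin m, b i.succ = (bk i : Fin (m + 1) → F) := fun i => by rw [hb]; rfl
  have hcoord : b.coord 0 = f := by
    refine b.ext fun i => ?_
    refine Fin.cases ?_ (fun i => ?_) i
    · rw [Module.Basis.coord_apply, Module.Basis.repr_self, hb0, hf1]; simp
    · rw [Module.Basis.coord_apply, Module.Basis.repr_self, hbs, LinearMap.mem_ker.1 (bk i).2]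
      simp
  have hsim : MSim A (LinearMap.toMatrix b b A.mulVecLin) := by
    let s := Pi.basisFun F (Fin (m + 1))
    refine ⟨s.toMatrix b, b.toMatrix s, s.toMatrix_mul_toMatrix_flip b,
      b.toMatrix_mul_toMatrix_flip s, ?_⟩
    rw [basis_toMatrix_mul_linearMap_toMatrix_mul_basis_toMatrix]
    simp only [s, LinearMap.toMatrix_eq_toMatrix', ← Matrix.toLin'_apply',
      LinearMap.toMatrix'_toLin']
  set M := LinearMap.toMatrix b b A.mulVecLin with hM
  have hM00 : M 0 0 = α := by
    rw [hM, LinearMap.toMatrix_apply, hb0, ← Module.Basis.coord_apply, hcoord, hf2]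
  have hsim2 := hsim.trans (MSim.submatrix M (sumFinEquiv m)).symm
  set N := M.submatrix (sumFinEquiv m) (sumFinEquiv m) with hN
  have hN11 : N.toBlocks₁₁ = α • 1 := by
    ext i j
    simp [Matrix.toBlocks₁₁, hN, sumFinEquiv_inl, hM00]
  refine ⟨N.toBlocks₁₂, N.toBlocks₂₁, N.toBlocks₂₂, ?_, ?_⟩
  · intro hc
    have hMc : ∀ i : Fin m, M i.succ 0 = 0 := fun i => by
      have := congrFun (congrFun hc i) ()
      simpa [Matrix.toBlocks₂₁, hN, sumFinEquiv_inl, sumFinEquiv_inr] using this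
    have hAv : A.mulVecLin v = α • v := by
      refine b.ext_elem fun i => ?_
      rw [← hb0, ← LinearMap.toMatrix_apply, ← hM, map_smul, Module.Basis.repr_self]
      refine Fin.cases ?_ (fun i => ?_) i
      · simp [hM00]
      · simp [hMc]
    rw [LinearIndependent.pair_iff] at hv
    have := hv α (-1) (by rw [hAv]; simp)
    simp at this
  · rw [← hN11, Matrix.fromBlocks_toBlocks]
    exact hsim2

/-- One can moreover make the Schur complement nonscalar. -/
theorem MSim.exists_schur {m : ℕ} (A : Matrix (Fin (m + 1)) (Fin (m + 1)) F)
    (hA : ∀ s : F, A ≠ s • 1) (hdet : A.det ≠ 0) (α : F) (hα : α ≠ 0) :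
    ∃ (r : Matrix Unit (Fin m) F) (c : Matrix (Fin m) Unit F) (S : Matrix (Fin m) (Fin m) F),
      MSim A (Matrix.fromBlocks (α • 1) r c (S + α⁻¹ • (c * r))) ∧
      (m ≤ 1 ∨ ∀ s : F, S ≠ s • 1) := by
  obtain ⟨r, c, D, hc, hsim⟩ := MSim.exists_corner A hA α
  by_cases hS : m ≤ 1 ∨ ∀ s : F, D - α⁻¹ • (c * r) ≠ s • 1
  · exact ⟨r, c, D - α⁻¹ • (c * r), by simpa using hsim, hS⟩
  push Not at hS
  obtain ⟨hm, s, hs⟩ := hS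
  obtain rfl : D = s • 1 + α⁻¹ • (c * r) := by rw [← hs]; simp
  have hs0 : s ≠ 0 := by
    rintro rfl
    apply hdet
    rw [hsim.det]
    have heq : Matrix.fromBlocks (α • 1) r c ((0 : F) • 1 + α⁻¹ • (c * r)) =
      Matrix.fromBlocks (1 : Matrix Unit Unit F) 0 (α⁻¹ • c) (1 : Matrix (Fin m) (Fin m) F) *
      Matrix.fromBlocks (α • 1) r 0 0 := by
      simp [Matrix.fromBlocks_multiply, hα]
    have : Nonempty (Fin m) := ⟨⟨0, by omega⟩⟩
    rw [heq, Matrix.det_mul, Matrix.det_fromBlocks_zero₂₁ _ _ (0 : Matrix (Fin m) (Fin m) F),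
      Matrix.det_zero]
    simp
  obtain ⟨φ, hφ0, hφ⟩ : ∃ φ : Matrix Unit (Fin m) F, φ ≠ 0 ∧ φ * c = 0 := by
    let i0 : Fin m := ⟨0, by omega⟩
    let i1 : Fin m := ⟨1, by omega⟩
    have hne : i0 ≠ i1 := by simp [i0, i1]
    by_cases h0 : c i0 () = 0
    · refine ⟨Matrix.of fun _ j => Pi.single (M := fun _ => F) i0 1 j, ?_, ?_⟩
      · intro h
        simpa using congrFun (congrFun h ()) i0
      · ext i j
        simp [Matrix.mul_apply, Pi.single_apply, h0]
    · refine ⟨Matrix.of fun _ j => c i1 () * Pi.single (M := fun _ => F) i0 1 j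
        - c i0 () * Pi.single (M := fun _ => F) i1 1 j, ?_, ?_⟩
      · intro h
        have := congrFun (congrFun h ()) i1
        simp [hne, h0] at this
      · ext i j
        simp [Matrix.mul_apply, Pi.single_apply, sub_mul, Finset.sum_sub_distrib]
        ring
  have hcφ : c * φ ≠ 0 := by
    intro h
    apply hφ0
    obtain ⟨i, hi⟩ : ∃ i, c i () ≠ 0 := by
      by_contra! h'
      exact hc (by ext i j; exact h' i)
    ext u j
    have := congrFun (congrFun h i) j
    simpa [Matrix.mul_apply, hi] using this
  refine ⟨r + φ * (s • 1 + α⁻¹ • (c * r)) - α • φ, c, s • 1 - (α⁻¹ * s) • (c * φ), ?_, ?_⟩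
  · refine hsim.trans (MSim.symm ?_)
    refine ⟨Matrix.fromBlocks 1 φ 0 1, Matrix.fromBlocks 1 (-φ) 0 1, ?_, ?_, ?_⟩
    · simp [Matrix.fromBlocks_multiply]
    · simp [Matrix.fromBlocks_multiply]
    · simp only [Matrix.fromBlocks_multiply]
      have h3 : φ * (c * r) = 0 := by rw [← Matrix.mul_assoc, hφ, Matrix.zero_mul]
      congr 1
      · simp [hφ]
      · simp [hφ, Matrix.mul_add, Matrix.add_mul, h3, sub_eq_add_neg]
        abel
      · simp
      · simp [Matrix.mul_add, Matrix.mul_sub, h3, smul_smul, hα, smul_add, smul_sub]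
        abel
  · right
    intro t ht
    have h1 : (s - t) • (1 : Matrix (Fin m) (Fin m) F) = (α⁻¹ * s) • (c * φ) := by
      rw [sub_smul, ← ht]; simp
    have h2 : (s - t) • c = 0 := by
      have := congrArg (· * c) h1
      simpa [Matrix.mul_assoc, hφ] using this
    have h3 : s - t = 0 := (smul_eq_zero.1 h2).resolve_right hc
    rw [h3, zero_smul] at h1
    exact (smul_ne_zero (mul_ne_zero (inv_ne_zero hα) hs0) hcφ) h1.symm

/-- Sourour's factorization with distinct eigenvalues. -/
theorem MSim.factor (m : ℕ) : ∀ (A : Matrix (Fin m) (Fin m) F) (β γ : Fin m → F),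
    Function.Injective β → Function.Injective γ → A.det = (∏ i, β i) * ∏ i, γ i →
    A.det ≠ 0 → (m ≤ 1 ∨ ∀ s : F, A ≠ s • 1) →
    ∃ B C : Matrix (Fin m) (Fin m) F, A = B * C ∧ MSim B (Matrix.diagonal β) ∧
      MSim C (Matrix.diagonal γ) := by
  have rfl' : ∀ {k : ℕ} (B : Matrix (Fin k) (Fin k) F), MSim B B :=
    fun B => ⟨1, 1, by simp, by simp, by simp⟩
  induction m with
  | zero =>
    intro A β γ _ _ _ _ _
    exact ⟨_, _, by ext i; exact i.elim0, rfl' _, rfl' _⟩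
  | succ m ih =>
    intro A β γ hβ hγ hdet hdet0 hns
    by_cases hm : m = 0
    · subst hm
      refine ⟨_, _, ?_, rfl' _, rfl' _⟩
      ext i j
      fin_cases i; fin_cases j
      simpa using hdet
    replace hns := hns.resolve_left (by omega)
    have h0 := hdet0
    rw [hdet, Fin.prod_univ_succ, Fin.prod_univ_succ] at h0
    have hb0 : β 0 ≠ 0 := fun h => h0 (by simp [h])
    have hg0 : γ 0 ≠ 0 := fun h => h0 (by simp [h])
    have hα : β 0 * γ 0 ≠ 0 := mul_ne_zero hb0 hg0
    obtain ⟨r, c, S, hsim, hS⟩ := MSim.exists_schur A hns hdet0 (β 0 * γ 0) hα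
    have hfac : Matrix.fromBlocks ((β 0 * γ 0) • 1) r c (S + (β 0 * γ 0)⁻¹ • (c * r)) =
        Matrix.fromBlocks (β 0 • (1 : Matrix Unit Unit F)) 0 ((γ 0)⁻¹ • c)
          (1 : Matrix (Fin m) (Fin m) F) *
        Matrix.fromBlocks (γ 0 • 1) ((β 0)⁻¹ • r) 0 S := by
      simp [Matrix.fromBlocks_multiply, smul_smul, hb0, hg0, add_comm, mul_comm]
    have hSdet : S.det = (∏ i : Fin m, β i.succ) * ∏ i : Fin m, γ i.succ := by
      have h1 := hsim.det
      rw [hfac, Matrix.det_mul, Matrix.det_fromBlocks_zero₁₂, Matrix.det_fromBlocks_zero₂₁,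
        hdet, Fin.prod_univ_succ, Fin.prod_univ_succ] at h1
      simp at h1
      apply mul_left_cancel₀ hα
      linear_combination -h1
    have hSdet0 : S.det ≠ 0 := by
      rw [hSdet]
      intro h
      apply h0
      linear_combination (β 0 * γ 0) * h
    obtain ⟨B, C, rfl, hB, hC⟩ := ih S (fun i => β i.succ) (fun i => γ i.succ)
      (fun i j h => Fin.succ_injective _ (hβ h)) (fun i j h => Fin.succ_injective _ (hγ h))
      hSdet hSdet0 hS
    have hB' := MSim.lower β hβ ((γ 0)⁻¹ • c) B hB
    have hC' := MSim.upper γ hγ ((β 0)⁻¹ • r) C hC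
    have hfac2 : Matrix.fromBlocks ((β 0 * γ 0) • 1) r c (B * C + (β 0 * γ 0)⁻¹ • (c * r)) =
        Matrix.fromBlocks (β 0 • (1 : Matrix Unit Unit F)) 0 ((γ 0)⁻¹ • c) B *
        Matrix.fromBlocks (γ 0 • 1) ((β 0)⁻¹ • r) 0 C := by
      simp [Matrix.fromBlocks_multiply, smul_smul, hb0, hg0, add_comm, mul_comm]
    rw [hfac2] at hsim
    obtain ⟨P, Q, h1, h2, hAe⟩ := hsim
    set X := Matrix.fromBlocks (β 0 • (1 : Matrix Unit Unit F)) 0 ((γ 0)⁻¹ • c) B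
    set Y := Matrix.fromBlocks (γ 0 • (1 : Matrix Unit Unit F)) ((β 0)⁻¹ • r) 0 C
    refine ⟨P * X * Q, P * Y * Q, ?_, MSim.trans ⟨P, Q, h1, h2, rfl⟩ hB',
      MSim.trans ⟨P, Q, h1, h2, rfl⟩ hC'⟩
    calc A = P * X * (1 * Y) * Q := by rw [hAe]; simp only [Matrix.mul_assoc, Matrix.one_mul]
      _ = _ := by rw [← h2]; simp only [Matrix.mul_assoc]

theorem MSim.special {n : ℕ} (hn : 2 ≤ n) (a : Matrix.SpecialLinearGroup (Fin n) F)
    (da : Fin n → F) (ha : (a : Matrix (Fin n) (Fin n) F) = Matrix.diagonal da)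
    (B : Matrix (Fin n) (Fin n) F) (hB : MSim B (Matrix.diagonal da)) :
    ∃ x : Matrix.SpecialLinearGroup (Fin n) F,
      ((x * a * x⁻¹ : Matrix.SpecialLinearGroup (Fin n) F) : Matrix (Fin n) (Fin n) F) = B := by
  obtain ⟨P, Q, h1, h2, rfl⟩ := hB
  have hd : P.det * Q.det = 1 := by rw [← Matrix.det_mul, h1, Matrix.det_one]
  let i0 : Fin n := ⟨0, by omega⟩
  let d : Fin n → F := Function.update 1 i0 Q.det
  have hdd : (Matrix.diagonal d).det = Q.det := by
    simp [Matrix.det_diagonal, d, Finset.prod_update_of_mem]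
  let x : Matrix.SpecialLinearGroup (Fin n) F :=
    ⟨P * Matrix.diagonal d, by rw [Matrix.det_mul, hdd, hd]⟩
  refine ⟨x, ?_⟩
  have hxa : ((x * a : Matrix.SpecialLinearGroup (Fin n) F) : Matrix (Fin n) (Fin n) F) =
      (P * Matrix.diagonal da * Q) * x := by
    rw [Matrix.SpecialLinearGroup.coe_mul, ha]
    change P * Matrix.diagonal d * Matrix.diagonal da =
      P * Matrix.diagonal da * Q * (P * Matrix.diagonal d)
    calc _ = P * (Matrix.diagonal da * Matrix.diagonal d) := by
          rw [Matrix.mul_assoc, Matrix.diagonal_mul_diagonal, Matrix.diagonal_mul_diagonal]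
          simp only [mul_comm]
      _ = P * Matrix.diagonal da * (Q * P) * Matrix.diagonal d := by
          rw [h2]; simp only [Matrix.mul_assoc, Matrix.one_mul]
      _ = _ := by simp only [Matrix.mul_assoc]
  rw [Matrix.SpecialLinearGroup.coe_mul, hxa, Matrix.mul_assoc,
    ← Matrix.SpecialLinearGroup.coe_mul, mul_inv_cancel, Matrix.SpecialLinearGroup.coe_one,
    Matrix.mul_one]

end helpers

/-- Ellers–Gordeev: if `a, b ∈ SL_n(F)` are diagonal with pairwise distinct diagonal entries
(split regular semisimple), then every noncentral element of `SL_n(F)` lies in the product of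
the conjugacy classes of `a` and `b`. -/
theorem noncentral_mem_conjClass_mul {F : Type*} [Field F] (n : ℕ) (hn : 2 ≤ n)
    (a b : Matrix.SpecialLinearGroup (Fin n) F) (da db : Fin n → F)
    (ha : (a : Matrix (Fin n) (Fin n) F) = Matrix.diagonal da)
    (hb : (b : Matrix (Fin n) (Fin n) F) = Matrix.diagonal db)
    (hda : Function.Injective da) (hdb : Function.Injective db) :
    ∀ g : Matrix.SpecialLinearGroup (Fin n) F,
      g ∉ Subgroup.center (Matrix.SpecialLinearGroup (Fin n) F) →
      ∃ x y : Matrix.SpecialLinearGroup (Fin n) F, g = (x * a * x⁻¹) * (y * b * y⁻¹) := by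
  intro g hg
  have ha1 : ∏ i, da i = 1 := by rw [← Matrix.det_diagonal, ← ha, a.det_coe]
  have hb1 : ∏ i, db i = 1 := by rw [← Matrix.det_diagonal, ← hb, b.det_coe]
  have hns : ∀ s : F, (g : Matrix (Fin n) (Fin n) F) ≠ s • 1 := by
    intro s hs
    apply hg
    rw [Matrix.SpecialLinearGroup.mem_center_iff]
    refine ⟨s, ?_, ?_⟩
    · have := g.det_coe
      rw [hs] at this
      simpa using this
    · rw [hs, Matrix.smul_one_eq_diagonal]; rfl
  obtain ⟨B, C, hBC, hB, hC⟩ := MSim.factor n (g : Matrix (Fin n) (Fin n) F) da db hda hdb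
    (by rw [g.det_coe, ha1, hb1, one_mul]) (by rw [g.det_coe]; exact one_ne_zero) (Or.inr hns)
  obtain ⟨x, hx⟩ := MSim.special hn a da ha B hB
  obtain ⟨y, hy⟩ := MSim.special hn b db hb C hC
  refine ⟨x, y, Subtype.ext ?_⟩
  rw [Matrix.SpecialLinearGroup.coe_mul, hx, hy]
  exact hBC
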